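/- For any y ∈ W, X^1_y = δ_{y,y*} u^{l(y)}. Equivalently, the coefficient of a_1 in T_y a_1 (in the Lusztig–Vogan module) equals u^{l(y)} if y = y* and 0 otherwise. -/

import Mathlib

/-!
Write `*` for the involution. The polynomial `X^z_y` is computed by stripping right descents off
`y`, each step `y ↦ ys` sending `z` to one of `szs*`, `sz`, `z`. Following `yz` rather than `z`
bounds the support: `X^z_y ≠ 0` forces `yz = y*` or `l(yz) < l(y)`. Indeed the only step that
replaces `yz` by something other than `(yz)s*` or `yz` occurs when `ys < y` and `sz < z`, and then
`l(yz) < l(ysz)`, because the left inversions satisfy `N(ab) = N(a) ∆ aN(b)a⁻¹`. For `z = 1` only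
`y = y*` survives.

If `yz = y*`, the choice `z ↦ szs*` preserves this relation and all other choices run into the zeros
just described. Hence the recursion collapses to a single monomial, `X^z_y = u^{l(y) + ⌊l(z)/2⌋}`.
-/

open Polynomial
open scoped Classical

/-- The characterization (Proposition 1.2) of the polynomials `X^z_y ∈ ℤ[u]`, indexed by pairs
`(z, y)` with `z` a twisted involution (`st z = z⁻¹`) and `y ∈ W`: `X^z_1 = δ_{z,1}`, and for
`s ∈ S`, `y > ys`, the recursions 1.2(i)–(iv) hold. -/
def XRec {B W : Type} [Group W] {M : CoxeterMatrix B} (cs : CoxeterSystem M W)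
    (st : W ≃* W) (P : {z : W // st z = z⁻¹} → W → Polynomial ℤ) : Prop :=
  (∀ z : {z : W // st z = z⁻¹}, P z 1 = if z.1 = 1 then 1 else 0) ∧
  ∀ (i : B) (y : W), cs.length (y * cs.simple i) < cs.length y →
    ∀ z : {z : W // st z = z⁻¹},
      (cs.simple i * z.1 = z.1 * st (cs.simple i) →
        cs.length z.1 < cs.length (cs.simple i * z.1) →
        ∀ h : st (cs.simple i * z.1) = (cs.simple i * z.1)⁻¹,
          P z y = X * P z (y * cs.simple i) +
            (X + 1) * P ⟨cs.simple i * z.1, h⟩ (y * cs.simple i)) ∧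
      (cs.simple i * z.1 = z.1 * st (cs.simple i) →
        cs.length (cs.simple i * z.1) < cs.length z.1 →
        ∀ h : st (cs.simple i * z.1) = (cs.simple i * z.1)⁻¹,
          P z y = (X ^ 2 - X - 1) * P z (y * cs.simple i) +
            (X ^ 2 - X) * P ⟨cs.simple i * z.1, h⟩ (y * cs.simple i)) ∧
      (cs.simple i * z.1 ≠ z.1 * st (cs.simple i) →
        cs.length z.1 < cs.length (cs.simple i * z.1) →
        ∀ h : st (cs.simple i * z.1 * st (cs.simple i)) =
            (cs.simple i * z.1 * st (cs.simple i))⁻¹,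
          P z y = P ⟨cs.simple i * z.1 * st (cs.simple i), h⟩ (y * cs.simple i)) ∧
      (cs.simple i * z.1 ≠ z.1 * st (cs.simple i) →
        cs.length (cs.simple i * z.1) < cs.length z.1 →
        ∀ h : st (cs.simple i * z.1 * st (cs.simple i)) =
            (cs.simple i * z.1 * st (cs.simple i))⁻¹,
          P z y = (X ^ 2 - 1) * P z (y * cs.simple i) +
            X ^ 2 * P ⟨cs.simple i * z.1 * st (cs.simple i), h⟩ (y * cs.simple i))

namespace LusztigVogan

section Coxeter

variable {B W : Type*} [Group W] {M : CoxeterMatrix B} (cs : CoxeterSystem M W)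

/-! ### The inversion cocycle -/

/-- Conjugation by the simple reflection `cs.simple i` on signed group elements, changing the sign
of that reflection only. Signs are written additively in `ZMod 2`. -/
noncomputable def signedConj (i : B) : Function.End (W × ZMod 2) :=
  fun p ↦ (cs.simple i * p.1 * cs.simple i, p.2 + if p.1 = cs.simple i then 1 else 0)

theorem prod_map_signedConj_apply (ω : List B) (x : W) (e : ZMod 2) :
    (ω.map (signedConj cs)).prod (x, e) =
      (cs.wordProd ω * x * (cs.wordProd ω)⁻¹,
        e + (cs.leftInvSeq ω).count (cs.wordProd ω * x * (cs.wordProd ω)⁻¹)) := by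
  induction ω with
  | nil => simp [Function.End.one_def]
  | cons i ω ih =>
    set t := cs.wordProd ω * x * (cs.wordProd ω)⁻¹ with ht
    have hconj : cs.wordProd (i :: ω) * x * (cs.wordProd (i :: ω))⁻¹ =
        MulAut.conj (cs.simple i) t := by
      simp [ht, cs.wordProd_cons, mul_assoc]
    have hfix : cs.simple i = MulAut.conj (cs.simple i) t ↔ t = cs.simple i := by
      rw [eq_comm, MulAut.conj_apply, mul_inv_eq_iff_eq_mul, mul_right_inj]
    change signedConj cs i ((ω.map (signedConj cs)).prod (x, e)) = _
    rw [ih, hconj,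
      CoxeterSystem.leftInvSeq, List.count_cons,
      List.count_map_of_injective _ _ (MulAut.conj (cs.simple i)).injective]
    refine Prod.ext (by simp [signedConj]) ?_
    simp only [signedConj, beq_iff_eq, hfix]
    push_cast
    rw [add_assoc]

theorem prod_map_alternatingWord {G : Type*} [Monoid G] (f : B → G) (i j : B) (m : ℕ) :
    ((CoxeterSystem.alternatingWord i j (2 * m)).map f).prod = (f i * f j) ^ m := by
  induction m with
  | zero => simp [CoxeterSystem.alternatingWord]
  | succ m ih =>
    simp [Nat.mul_succ, CoxeterSystem.alternatingWord_succ', ih, pow_succ', mul_assoc]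

theorem even_count_leftInvSeq_alternatingWord (i j : B) (t : W) :
    Even ((cs.leftInvSeq (CoxeterSystem.alternatingWord i j (2 * M i j))).count t) := by
  let reflections := (List.range (M i j)).map
    fun k ↦ cs.wordProd (CoxeterSystem.alternatingWord j i (2 * k + 1))
  have hperiod (k : ℕ) : cs.wordProd (CoxeterSystem.alternatingWord j i (2 * (M i j + k) + 1)) =
      cs.wordProd (CoxeterSystem.alternatingWord j i (2 * k + 1)) := by
    have hdiv (n : ℕ) : (2 * n + 1) / 2 = n := by omega
    simp [cs.prod_alternatingWord_eq_mul_pow, hdiv, pow_add]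
  have hdouble : cs.leftInvSeq (CoxeterSystem.alternatingWord i j (2 * M i j)) =
      reflections ++ reflections := by
    refine List.ext_getElem (by simp [reflections, two_mul]) fun k hk _ ↦ ?_
    rw [cs.getElem_leftInvSeq_alternatingWord _ _ _ _ (by simpa using hk), List.getElem_append]
    split_ifs with hkM
    · simp [reflections]
    · have hkM : M i j ≤ k := by simpa [reflections] using hkM
      obtain ⟨l, rfl⟩ := Nat.exists_eq_add_of_le hkM
      simp [reflections, hperiod]
  simp [hdouble]

theorem isLiftable_signedConj : M.IsLiftable (signedConj cs) := by
  intro i j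
  have hword : cs.wordProd (CoxeterSystem.alternatingWord i j (2 * M i j)) = 1 := by
    simp [cs.prod_alternatingWord_eq_mul_pow]
  funext ⟨x, e⟩
  rw [← prod_map_alternatingWord, prod_map_signedConj_apply, hword]
  simp [(even_count_leftInvSeq_alternatingWord cs i j x).natCast_zmod_two, Function.End.one_def]

/-- The action of `W` on signed group elements extending `signedConj`. -/
noncomputable def signedAction : W →* Function.End (W × ZMod 2) :=
  cs.lift ⟨signedConj cs, isLiftable_signedConj cs⟩

/-- The parity of the number of occurrences of `t` in the left inversion sequence of any word for
`w`, read off as the sign picked up by `w⁻¹ * t * w` under `signedAction`. -/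
noncomputable def inversionParity (w t : W) : ZMod 2 := (signedAction cs w (w⁻¹ * t * w, 0)).2

theorem signedAction_wordProd (ω : List B) :
    signedAction cs (cs.wordProd ω) = (ω.map (signedConj cs)).prod := by
  rw [CoxeterSystem.wordProd, map_list_prod, List.map_map]
  congr 2
  funext i
  exact cs.lift_apply_simple (isLiftable_signedConj cs) i

theorem inversionParity_wordProd (ω : List B) (t : W) :
    inversionParity cs (cs.wordProd ω) t = (cs.leftInvSeq ω).count t := by
  simp [inversionParity, signedAction_wordProd, prod_map_signedConj_apply, mul_assoc]

theorem signedAction_apply (w x : W) (e : ZMod 2) :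
    signedAction cs w (x, e) = (w * x * w⁻¹, e + inversionParity cs w (w * x * w⁻¹)) := by
  obtain ⟨ω, rfl⟩ := cs.wordProd_surjective w
  rw [inversionParity_wordProd, signedAction_wordProd, prod_map_signedConj_apply]

theorem inversionParity_mul (a b t : W) :
    inversionParity cs (a * b) t =
      inversionParity cs a t + inversionParity cs b (a⁻¹ * t * a) := by
  have hcomp (p : W × ZMod 2) :
      signedAction cs (a * b) p = signedAction cs a (signedAction cs b p) := by
    rw [map_mul]
    rfl
  rw [inversionParity, hcomp, signedAction_apply, signedAction_apply]
  simp [mul_assoc, add_comm]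

theorem inversionParity_simple_self (i : B) :
    inversionParity cs (cs.simple i) (cs.simple i) = 1 := by
  simpa using inversionParity_wordProd cs [i] (cs.simple i)

theorem inversionParity_self {t : W} (ht : cs.IsReflection t) : inversionParity cs t t = 1 := by
  obtain ⟨v, i, rfl⟩ := ht
  set t := v * cs.simple i * v⁻¹ with ht
  have hv : v⁻¹ * t * v = cs.simple i := by simp [ht, mul_assoc]
  have hcancel : inversionParity cs v t + inversionParity cs v⁻¹ (cs.simple i) = 0 := by
    rw [← hv, ← inversionParity_mul, mul_inv_cancel]
    simpa using inversionParity_wordProd cs [] t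
  calc inversionParity cs t t
      = inversionParity cs v t + (1 + inversionParity cs v⁻¹ (cs.simple i)) := by
        conv_lhs => rw [ht, mul_assoc, inversionParity_mul, ← mul_assoc, ← ht, hv,
          inversionParity_mul, inversionParity_simple_self]
        simp
    _ = 1 := by rw [add_left_comm, hcancel, add_zero]

theorem isLeftInversion_of_inversionParity_ne_zero {w t : W} (h : inversionParity cs w t ≠ 0) :
    cs.IsLeftInversion w t := by
  obtain ⟨ω, hω, rfl⟩ := cs.exists_isReduced w
  refine cs.isLeftInversion_of_mem_leftInvSeq hω ?_
  by_contra ht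
  exact h (by rw [inversionParity_wordProd, List.count_eq_zero_of_not_mem ht, Nat.cast_zero])

theorem inversionParity_ne_zero_iff {w t : W} :
    inversionParity cs w t ≠ 0 ↔ cs.IsLeftInversion w t := by
  refine ⟨isLeftInversion_of_inversionParity_ne_zero cs, fun hinv hzero ↦ ?_⟩
  have htw : inversionParity cs (t * w) t = 1 := by
    rw [inversionParity_mul, inversionParity_self cs hinv.1, inv_mul_cancel, one_mul, hzero,
      add_zero]
  have hlt := (isLeftInversion_of_inversionParity_ne_zero cs (htw ▸ one_ne_zero)).2
  rw [← mul_assoc, hinv.1.mul_self, one_mul] at hlt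
  exact hlt.asymm hinv.2

theorem isLeftInversion_mul_iff {a b t : W} :
    cs.IsLeftInversion (a * b) t ↔
      Xor (cs.IsLeftInversion a t) (cs.IsLeftInversion b (a⁻¹ * t * a)) := by
  have hadd : ∀ p q : ZMod 2, p + q ≠ 0 ↔ Xor (p ≠ 0) (q ≠ 0) := by decide
  simp only [← inversionParity_ne_zero_iff, inversionParity_mul, hadd]

/-! ### Lengths -/

theorem length_mul_lt_length_mul_mul {t : W} (ht : cs.IsReflection t) {y z : W}
    (hy : cs.length (y * t) < cs.length y) (hz : cs.length (t * z) < cs.length z) :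
    cs.length (y * z) < cs.length (y * t * z) := by
  have hy' : cs.IsLeftInversion y⁻¹ t := cs.isLeftInversion_inv_iff.mpr ⟨ht, hy⟩
  have hz' : cs.IsLeftInversion (y⁻¹ * (y * z)) t := by
    rw [inv_mul_cancel_left]
    exact ⟨ht, hz⟩
  have hyz : ¬ cs.IsLeftInversion (y * z) (y * t * y⁻¹) := fun h ↦ by
    rw [isLeftInversion_mul_iff, inv_inv] at hz'
    simp [hy', h] at hz'
  have hmul : y * t * y⁻¹ * (y * z) = y * t * z := by group
  have hle : cs.length (y * z) ≤ cs.length (y * t * z) := by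
    rw [← hmul]
    exact not_lt.mp fun h ↦ hyz ⟨ht.conj y, h⟩
  have hne := (ht.conj y).length_mul_right_ne (y * z)
  rw [hmul] at hne
  exact lt_of_le_of_ne hle hne.symm

theorem isLeftInversion_simple_iff {i : B} {t : W} :
    cs.IsLeftInversion (cs.simple i) t ↔ t = cs.simple i := by
  refine ⟨fun h ↦ ?_, ?_⟩
  · have hone : t * cs.simple i = 1 := by
      rw [← cs.length_eq_zero_iff, ← Nat.lt_one_iff, ← cs.length_simple i]
      exact h.2
    rw [eq_inv_of_mul_eq_one_left hone, cs.inv_simple]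
  · rintro rfl
    exact ⟨cs.isReflection_simple i, by simp⟩

theorem length_simple_mul_mul_simple_of_lt {w : W} {i j : B}
    (hi : cs.length w < cs.length (cs.simple i * w))
    (hj : cs.length w < cs.length (w * cs.simple j))
    (hne : cs.simple i * w ≠ w * cs.simple j) :
    cs.length (cs.simple i * w * cs.simple j) = cs.length w + 2 := by
  have hright : ¬ cs.IsRightDescent (cs.simple i * w) j := by
    rw [← cs.isLeftDescent_inv_iff, ← cs.isLeftInversion_simple_iff_isLeftDescent, mul_inv_rev,
      isLeftInversion_mul_iff, cs.isLeftInversion_simple_iff_isLeftDescent,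
      cs.isLeftDescent_inv_iff, cs.inv_simple, isLeftInversion_simple_iff, inv_inv,
      mul_inv_eq_iff_eq_mul]
    simp [CoxeterSystem.IsRightDescent, hj.le, hne.symm]
  have hleft : ¬ cs.IsLeftDescent w i := hi.not_gt
  rw [cs.not_isRightDescent_iff.mp hright, cs.not_isLeftDescent_iff.mp hleft]

theorem length_simple_mul_mul_simple_of_gt {w : W} {i j : B}
    (hi : cs.length (cs.simple i * w) < cs.length w)
    (hj : cs.length (w * cs.simple j) < cs.length w)
    (hne : cs.simple i * w ≠ w * cs.simple j) :
    cs.length (cs.simple i * w * cs.simple j) + 2 = cs.length w := by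
  have hi' := cs.isLeftDescent_iff.mp hi
  have hj' := cs.isRightDescent_iff.mp hj
  rcases cs.length_mul_simple (cs.simple i * w) j with hup | hdown
  · have hne' : cs.simple i * (cs.simple i * w) ≠ cs.simple i * w * cs.simple j := fun h ↦
      hne (mul_left_cancel (h.trans (mul_assoc _ _ _)))
    have h2 := length_simple_mul_mul_simple_of_lt cs (by simpa using hi) (by omega) hne'
    rw [cs.simple_mul_simple_cancel_left] at h2
    omega
  · omega

theorem length_map_le {B' W' : Type*} [Group W'] {M' : CoxeterMatrix B'}
    (cs' : CoxeterSystem M' W') (f : W →* W') (hf : ∀ i, ∃ j, f (cs.simple i) = cs'.simple j)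
    (w : W) : cs'.length (f w) ≤ cs.length w := by
  choose τ hτ using hf
  obtain ⟨ω, hω, rfl⟩ := cs.exists_isReduced w
  have hmap : f (cs.wordProd ω) = cs'.wordProd (ω.map τ) := by
    simp [CoxeterSystem.wordProd, map_list_prod, Function.comp_def, hτ]
  rw [hmap, hω.eq, ← ω.length_map τ]
  exact cs'.length_wordProd_le _

theorem rightDescent_induction {p : W → Prop} (one : p 1)
    (mul : ∀ w i, cs.IsRightDescent w i → p (w * cs.simple i) → p w) (w : W) : p w := by
  induction hn : cs.length w using Nat.strong_induction_on generalizing w with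
  | _ n ih =>
    by_cases hw : w = 1
    · exact hw ▸ one
    · obtain ⟨i, hi⟩ := cs.exists_rightDescent_of_ne_one hw
      exact mul w i hi (ih _ (hn ▸ hi) _ rfl)

end Coxeter

/-! ### Twisted involutions and the polynomials -/

section TwistedInvolution

variable {B W : Type*} [Group W] {M : CoxeterMatrix B} (cs : CoxeterSystem M W) {st : W ≃* W}
  (hst_inv : ∀ w, st (st w) = w) (hst_S : ∀ i : B, ∃ j : B, st (cs.simple i) = cs.simple j)

theorem inv_map_simple (i : B) : (st (cs.simple i))⁻¹ = st (cs.simple i) := by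
  rw [← map_inv, cs.inv_simple]

theorem map_simple_mul_of_comm {z : W} (hz : st z = z⁻¹) {i : B}
    (hcomm : cs.simple i * z = z * st (cs.simple i)) :
    st (cs.simple i * z) = (cs.simple i * z)⁻¹ := by
  rw [map_mul, hz, hcomm, mul_inv_rev, inv_map_simple]

theorem simple_mul_mul_map_simple_of_comm {z : W} {i : B}
    (hcomm : cs.simple i * z = z * st (cs.simple i)) :
    cs.simple i * z * st (cs.simple i) = z := by
  rw [hcomm, mul_assoc, ← map_mul, cs.simple_mul_simple_self, map_one, mul_one]

include hst_inv

theorem map_simple_mul_mul_map_simple {z : W} (hz : st z = z⁻¹) (i : B) :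
    st (cs.simple i * z * st (cs.simple i)) = (cs.simple i * z * st (cs.simple i))⁻¹ := by
  rw [map_mul, map_mul, hst_inv, hz, mul_inv_rev, mul_inv_rev, inv_map_simple, cs.inv_simple,
    mul_assoc]

include hst_S

theorem length_map_involution (w : W) : cs.length (st w) = cs.length w := by
  have hle := length_map_le cs cs st.toMonoidHom hst_S
  exact (hle w).antisymm (by simpa [hst_inv] using hle (st w))

theorem length_mul_map_simple {z : W} (hz : st z = z⁻¹) (i : B) :
    cs.length (z * st (cs.simple i)) = cs.length (cs.simple i * z) := by
  rw [← length_map_involution cs hst_inv hst_S (cs.simple i * z), map_mul, hz, ← cs.length_inv,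
    mul_inv_rev, inv_map_simple]

theorem length_simple_mul_mul_map_simple_of_lt {z : W} (hz : st z = z⁻¹) {i : B}
    (hlt : cs.length z < cs.length (cs.simple i * z))
    (hne : cs.simple i * z ≠ z * st (cs.simple i)) :
    cs.length (cs.simple i * z * st (cs.simple i)) = cs.length z + 2 := by
  have hright := length_mul_map_simple cs hst_inv hst_S hz i
  obtain ⟨j, hj⟩ := hst_S i
  rw [hj] at hne hright ⊢
  exact length_simple_mul_mul_simple_of_lt cs hlt (hright ▸ hlt) hne

theorem length_simple_mul_mul_map_simple_of_gt {z : W} (hz : st z = z⁻¹) {i : B}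
    (hgt : cs.length (cs.simple i * z) < cs.length z)
    (hne : cs.simple i * z ≠ z * st (cs.simple i)) :
    cs.length (cs.simple i * z * st (cs.simple i)) + 2 = cs.length z := by
  have hright := length_mul_map_simple cs hst_inv hst_S hz i
  obtain ⟨j, hj⟩ := hst_S i
  rw [hj] at hne hright ⊢
  exact length_simple_mul_mul_simple_of_gt cs hgt (hright ▸ hgt) hne

end TwistedInvolution

end LusztigVogan

namespace XRec

open LusztigVogan

variable {B W : Type} [Group W] {M : CoxeterMatrix B} {cs : CoxeterSystem M W} {st : W ≃* W}
  {P : {z : W // st z = z⁻¹} → W → Polynomial ℤ} (hP : XRec cs st P)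
  (hst_inv : ∀ w, st (st w) = w) (hst_S : ∀ i : B, ∃ j : B, st (cs.simple i) = cs.simple j)

include hP hst_inv

theorem exists_apply_mul_simple_ne_zero {y : W} {i : B} (hi : cs.IsRightDescent y i)
    {z : {z : W // st z = z⁻¹}} (hne : P z y ≠ 0) :
    ∃ z' : {z : W // st z = z⁻¹}, P z' (y * cs.simple i) ≠ 0 ∧
      (z'.1 = cs.simple i * z.1 * st (cs.simple i) ∨ z'.1 = cs.simple i * z.1 ∨
        z' = z ∧ cs.length (cs.simple i * z.1) < cs.length z.1) := by
  obtain ⟨comm_up, comm_down, conj_up, conj_down⟩ := hP.2 i y hi z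
  by_contra hnone
  have vanish (z' : {z : W // st z = z⁻¹})
      (hz' : z'.1 = cs.simple i * z.1 * st (cs.simple i) ∨ z'.1 = cs.simple i * z.1 ∨
        z' = z ∧ cs.length (cs.simple i * z.1) < cs.length z.1) :
      P z' (y * cs.simple i) = 0 :=
    by_contra fun h ↦ hnone ⟨z', h, hz'⟩
  apply hne
  by_cases hcomm : cs.simple i * z.1 = z.1 * st (cs.simple i)
  · have hmul := map_simple_mul_of_comm cs z.2 hcomm
    have hz := vanish z (.inl (simple_mul_mul_map_simple_of_comm cs hcomm).symm)
    have hsz := vanish ⟨_, hmul⟩ (.inr (.inl rfl))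
    rcases (cs.length_simple_mul_ne z.1 i).lt_or_gt with hdown | hup
    · simp [comm_down hcomm hdown hmul, hz, hsz]
    · simp [comm_up hcomm hup hmul, hz, hsz]
  · have hconj := map_simple_mul_mul_map_simple cs hst_inv z.2 i
    have hszs := vanish ⟨_, hconj⟩ (.inl rfl)
    rcases (cs.length_simple_mul_ne z.1 i).lt_or_gt with hdown | hup
    · simp [conj_down hcomm hdown hconj, hszs, vanish z (.inr (.inr ⟨rfl, hdown⟩))]
    · rw [conj_up hcomm hup hconj, hszs]

include hst_S

theorem mul_eq_or_length_mul_lt {y : W} {z : {z : W // st z = z⁻¹}} (hne : P z y ≠ 0) :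
    y * z.1 = st y ∨ cs.length (y * z.1) < cs.length y := by
  induction y using rightDescent_induction cs generalizing z with
  | one =>
    left
    by_contra hz
    exact hne (by simpa [hP.1] using hz)
  | mul y i hi ih =>
    have hlen := cs.isRightDescent_iff.mp hi
    obtain ⟨z', hne', hz'⟩ := hP.exists_apply_mul_simple_ne_zero hst_inv hi hne
    have ih := ih hne'
    rw [map_mul] at ih
    rcases hz' with hconj | hmul | ⟨rfl, hdown⟩
    · have hyz : y * cs.simple i * z'.1 = y * z.1 * st (cs.simple i) := by
        simp [hconj, mul_assoc]
      obtain ⟨j, hj⟩ := hst_S i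
      rw [hyz] at ih
      refine ih.imp mul_right_cancel fun hlt ↦ ?_
      have := cs.length_mul_simple (y * z.1) j
      rw [hj] at hlt
      omega
    · have hyz : y * cs.simple i * z'.1 = y * z.1 := by simp [hmul, mul_assoc]
      have hle := length_map_involution cs hst_inv hst_S (y * cs.simple i)
      rw [map_mul] at hle
      rw [hyz] at ih
      right
      rcases ih with heq | hlt
      · rw [heq]; omega
      · omega
    · have hlt := length_mul_lt_length_mul_mul cs (cs.isReflection_simple i) hi hdown
      have hle := length_map_involution cs hst_inv hst_S (y * cs.simple i)
      rw [map_mul] at hle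
      right
      rcases ih with heq | hlt'
      · rw [heq] at hlt; omega
      · omega

theorem apply_eq_zero_of_length_lt {y : W} {z : {z : W // st z = z⁻¹}}
    (hlt : cs.length y < cs.length (y * z.1)) : P z y = 0 := by
  by_contra hne
  rcases hP.mul_eq_or_length_mul_lt hst_inv hst_S hne with heq | hlt'
  · rw [heq, length_map_involution cs hst_inv hst_S] at hlt
    exact hlt.false
  · exact hlt.asymm hlt'

theorem apply_mul_simple_eq_zero {y : W} {i : B} (hi : cs.IsRightDescent y i)
    {z : {z : W // st z = z⁻¹}} (hyz : y * z.1 = st y)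
    (hdown : cs.length (cs.simple i * z.1) < cs.length z.1) : P z (y * cs.simple i) = 0 := by
  apply hP.apply_eq_zero_of_length_lt hst_inv hst_S
  calc cs.length (y * cs.simple i)
      < cs.length y := hi
    _ = cs.length (y * z.1) := by rw [hyz, length_map_involution cs hst_inv hst_S]
    _ < cs.length (y * cs.simple i * z.1) :=
      length_mul_lt_length_mul_mul cs (cs.isReflection_simple i) hi hdown

theorem apply_simple_mul_eq_zero {y : W} {i : B} (hi : cs.IsRightDescent y i)
    {z z' : {z : W // st z = z⁻¹}} (hyz : y * z.1 = st y) (hz' : z'.1 = cs.simple i * z.1) :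
    P z' (y * cs.simple i) = 0 := by
  apply hP.apply_eq_zero_of_length_lt hst_inv hst_S
  calc cs.length (y * cs.simple i)
      < cs.length y := hi
    _ = cs.length (y * cs.simple i * z'.1) := by
      simp [hz', mul_assoc, hyz, length_map_involution cs hst_inv hst_S]

theorem apply_of_mul_eq {y : W} {z : {z : W // st z = z⁻¹}} (hyz : y * z.1 = st y) :
    P z y = X ^ (cs.length y + cs.length z.1 / 2) := by
  induction y using rightDescent_induction cs generalizing z with
  | one =>
    have hz : z.1 = 1 := by simpa using hyz
    simp [hP.1, hz]
  | mul y i hi ih =>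
    have hlen := cs.isRightDescent_iff.mp hi
    have hconj := map_simple_mul_mul_map_simple cs hst_inv z.2 i
    have hstrip := ih (z := ⟨_, hconj⟩) (by simp [mul_assoc, ← hyz])
    obtain ⟨comm_up, -, conj_up, conj_down⟩ := hP.2 i y hi z
    by_cases hcomm : cs.simple i * z.1 = z.1 * st (cs.simple i)
    · simp only [simple_mul_mul_map_simple_of_comm cs hcomm] at hstrip
      rcases (cs.length_simple_mul_ne z.1 i).lt_or_gt with hdown | hup
      · have hzero := hP.apply_mul_simple_eq_zero hst_inv hst_S hi hyz hdown
        exact absurd (hstrip.symm.trans hzero) (pow_ne_zero _ X_ne_zero)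
      · have hmul := map_simple_mul_of_comm cs z.2 hcomm
        have hzero := hP.apply_simple_mul_eq_zero hst_inv hst_S hi (z' := ⟨_, hmul⟩) hyz rfl
        rw [comm_up hcomm hup hmul, hstrip, hzero, mul_zero, add_zero, ← pow_succ', ← hlen,
          add_right_comm]
    · rcases (cs.length_simple_mul_ne z.1 i).lt_or_gt with hdown | hup
      · have hzero := hP.apply_mul_simple_eq_zero hst_inv hst_S hi hyz hdown
        have hdrop := length_simple_mul_mul_map_simple_of_gt cs hst_inv hst_S z.2 hdown hcomm
        rw [conj_down hcomm hdown hconj, hstrip, hzero, mul_zero, zero_add, ← pow_add]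
        congr 1
        lia
      · have hrise := length_simple_mul_mul_map_simple_of_lt cs hst_inv hst_S z.2 hup hcomm
        rw [conj_up hcomm hup hconj, hstrip]
        congr 1
        lia

end XRec

theorem statement14_general {B W : Type} [Group W] {M : CoxeterMatrix B}
    (cs : CoxeterSystem M W) (st : W ≃* W)
    (hst_inv : ∀ w, st (st w) = w)
    (hst_S : ∀ i : B, ∃ j : B, st (cs.simple i) = cs.simple j)
    (P : {z : W // st z = z⁻¹} → W → Polynomial ℤ) (hP : XRec cs st P)
    (h1 : st (1 : W) = (1 : W)⁻¹) (y : W) :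
    P ⟨1, h1⟩ y = if st y = y then X ^ cs.length y else 0 := by
  split_ifs with hy
  · simpa using hP.apply_of_mul_eq hst_inv hst_S (z := ⟨1, h1⟩) (by rw [mul_one, hy])
  · by_contra hne
    have hsupp := hP.mul_eq_or_length_mul_lt hst_inv hst_S hne
    rw [mul_one] at hsupp
    exact hsupp.elim (fun heq ↦ hy heq.symm) fun hlt ↦ hlt.false

/-- **Proposition 1.8.** For any `y ∈ W`, `X^1_y = δ_{y,y*} u^{l(y)}`. -/
theorem statement14 {B W : Type} [Group W] [Finite B] {M : CoxeterMatrix B}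
    (cs : CoxeterSystem M W) (st : W ≃* W)
    (hst_inv : ∀ w, st (st w) = w)
    (hst_S : ∀ i : B, ∃ j : B, st (cs.simple i) = cs.simple j)
    (P : {z : W // st z = z⁻¹} → W → Polynomial ℤ) (hP : XRec cs st P)
    (h1 : st (1 : W) = (1 : W)⁻¹) (y : W) :
    P ⟨1, h1⟩ y = if st y = y then X ^ cs.length y else 0 := by
  exact statement14_general cs st hst_inv hst_S P hP h1 y
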